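/- Let X_1,...,X_n be bounded real random variables. Then H(X_1,...,X_n) = −I_sym(X_1,...,X_n) + ∑_{i=1}^n H(X_i) = −Ī_sym(X_1,...,X_n) + ∑_{i=1}^n H(X_i); in particular I_sym = Ī_sym whenever ∑_i H(X_i) is finite or H(X_1,...,X_n) > −∞. -/

import Mathlib

open MeasureTheory Filter
open scoped Classical ENNReal

/-- Normalized coordinate sum `κ_N(x) = N⁻¹ ∑_j x_j`. -/
noncomputable def kappa {N : ℕ} (x : Fin N → ℝ) : ℝ := (∑ j, x j) / N

/-- The micro-state set `Δ_R(X₁,…,Xₙ;N,m,δ)`: `n`-tuples of vectors in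
`[-R,R]^N` whose normalized mixed moments up to order `m` approximate the
joint moments of `(X₁,…,Xₙ)` within `δ`. -/
noncomputable def DeltaR {Ω : Type*} [MeasurableSpace Ω] (μ : Measure Ω)
    {n : ℕ} (X : Fin n → Ω → ℝ) (R : ℝ) (N m : ℕ) (δ : ℝ) :
    Set (Fin n → Fin N → ℝ) :=
  {x | (∀ i j, |x i j| ≤ R) ∧
    ∀ k : ℕ, 1 ≤ k → k ≤ m → ∀ idx : Fin k → Fin n,
      |kappa (fun j => ∏ l, x (idx l) j) - ∫ ω, ∏ l, X (idx l) ω ∂μ| < δ}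

/-- The permutation micro-state set `Δ_{sym,R}(X₁,…,Xₙ;N,m,δ) ⊆ S_N^n`:
tuples `(σ₁,…,σₙ)` such that `(σ₁(x₁),…,σₙ(xₙ)) ∈ Δ_R` for some nondecreasing
`x₁,…,xₙ ∈ ℝ^N_≤`. -/
noncomputable def DeltaSymR {Ω : Type*} [MeasurableSpace Ω] (μ : Measure Ω)
    {n : ℕ} (X : Fin n → Ω → ℝ) (R : ℝ) (N m : ℕ) (δ : ℝ) :
    Set (Fin n → Equiv.Perm (Fin N)) :=
  {σ | ∃ x : Fin n → Fin N → ℝ, (∀ i, Monotone (x i)) ∧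
    (fun i j => x i ((σ i)⁻¹ j)) ∈ DeltaR μ X R N m δ}

/-- `(1/N) log γ_{S_N}^{⊗n}(Δ_{sym,R}(X₁,…,Xₙ;N,m,δ))`, the normalized log of
the uniform probability of the permutation micro-states. -/
noncomputable def symQ {Ω : Type*} [MeasurableSpace Ω] (μ : Measure Ω)
    {n : ℕ} (X : Fin n → Ω → ℝ) (R : ℝ) (N m : ℕ) (δ : ℝ) : ℝ :=
  Real.log ((Nat.card (DeltaSymR μ X R N m δ) : ℝ) / (N.factorial : ℝ) ^ n) / N

/-- `(1/N) log λ_N^{⊗n}(Δ_R(X₁,…,Xₙ;N,m,δ))`, the normalized log-volume of the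
micro-states. -/
noncomputable def volQ {Ω : Type*} [MeasurableSpace Ω] (μ : Measure Ω)
    {n : ℕ} (X : Fin n → Ω → ℝ) (R : ℝ) (N m : ℕ) (δ : ℝ) : ℝ :=
  Real.log (volume (DeltaR μ X R N m δ)).toReal / N

/-- The mutual information `I_sym`, via `limsup` in `N` and the limit
(= infimum, by monotonicity) over `m → ∞`, `δ → 0+`. -/
noncomputable def Isym {Ω : Type*} [MeasurableSpace Ω] (μ : Measure Ω)
    {n : ℕ} (X : Fin n → Ω → ℝ) (R : ℝ) : EReal :=
  -(⨅ (m : ℕ) (δ : ℝ) (_ : 0 < δ),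
      Filter.limsup (fun N : ℕ => ((symQ μ X R N m δ : ℝ) : EReal)) atTop)

/-- The upper mutual information `Ī_sym`, via `liminf` in `N`. -/
noncomputable def IsymUpper {Ω : Type*} [MeasurableSpace Ω] (μ : Measure Ω)
    {n : ℕ} (X : Fin n → Ω → ℝ) (R : ℝ) : EReal :=
  -(⨅ (m : ℕ) (δ : ℝ) (_ : 0 < δ),
      Filter.liminf (fun N : ℕ => ((symQ μ X R N m δ : ℝ) : EReal)) atTop)

/-- Boltzmann–Gibbs (differential) entropy of `μ` with respect to a reference
measure `vol`, with value `⊥` (i.e. `-∞`) when `μ` has no density. -/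
noncomputable def diffEntropy {E : Type*} [MeasurableSpace E] (vol μ : Measure E) : EReal :=
  if μ ≪ vol then
    ((∫⁻ x, ENNReal.ofReal (Real.negMulLog (μ.rnDeriv vol x).toReal) ∂vol : ℝ≥0∞) : EReal)
      - ((∫⁻ x, ENNReal.ofReal (-(Real.negMulLog (μ.rnDeriv vol x).toReal)) ∂vol : ℝ≥0∞) : EReal)
  else ⊥

/-- Lemma 1.2 of the paper (assumed): the Boltzmann–Gibbs entropy is the
asymptotic normalized log-volume of the micro-state sets `Δ_R`, the limit in
`N` existing. -/
def MicrostateVolumeFormula {Ω : Type*} [MeasurableSpace Ω] (μ : Measure Ω)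
    {n : ℕ} (X : Fin n → Ω → ℝ) (R : ℝ) : Prop :=
  diffEntropy volume (Measure.map (fun ω (i : Fin n) => X i ω) μ)
      = ⨅ (m : ℕ) (δ : ℝ) (_ : 0 < δ),
          Filter.limsup (fun N : ℕ => ((volQ μ X R N m δ : ℝ) : EReal)) atTop ∧
  diffEntropy volume (Measure.map (fun ω (i : Fin n) => X i ω) μ)
      = ⨅ (m : ℕ) (δ : ℝ) (_ : 0 < δ),
          Filter.liminf (fun N : ℕ => ((volQ μ X R N m δ : ℝ) : EReal)) atTop

/-!
Up to a null set, sorting the coordinates of each `xᵢ` splits `Δ_R(X₁,…,Xₙ)` into pieces indexed by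
tuples of permutations, which lie in `Δ_sym`. Each piece is contained in a cell, the product of
rearranged copies of the sets of sorted microstates of the `Xᵢ`, and these have volume
`λ_N(Δ_R(Xᵢ)) / N!`. Hence `λ(Δ_R)` is at most the uniform probability of `Δ_sym` times
`∏ᵢ λ_N(Δ_R(Xᵢ))`.

Conversely, sorted vectors with nearly equal moments are close in normalized `ℓ¹`: test the moments
on polynomial approximations of a Kantorovich potential, finitely many of which suffice by
Arzelà–Ascoli. After refining `(m, δ)` to `(m', δ')`, the whole cell of each permutation tuple in
the finer `Δ_sym` therefore lies in the coarser `Δ_R`, and the cells are disjoint, so the inequality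
reverses up to this refinement. Both statements of the theorem are the limits of `(1/N) log` of
these inequalities.
-/

section Cells

variable {ι κ : Type*} [Fintype κ]

lemma ae_injective : ∀ᵐ x : κ → ℝ, Function.Injective x := by
  have hne : ∀ a b : κ, a ≠ b → ∀ᵐ x : κ → ℝ, x a ≠ x b := by
    intro a b hab
    let L : (κ → ℝ) →ₗ[ℝ] ℝ :=
      (LinearMap.proj a : (κ → ℝ) →ₗ[ℝ] ℝ) - LinearMap.proj b
    have hL : LinearMap.ker L ≠ ⊤ := fun h => by
      have : L (Pi.single a 1) = 0 := LinearMap.congr_fun (LinearMap.ker_eq_top.1 h) _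
      simp [L, hab.symm] at this
    have hker := Measure.addHaar_submodule volume (LinearMap.ker L) hL
    exact measure_mono_null (fun x hx => by simpa [L, sub_eq_zero] using hx) hker
  filter_upwards [ae_all_iff.2 fun a => ae_all_iff.2 fun b => ae_all_iff.2 (hne a b)]
    with x hx a b hab
  exact not_imp_not.1 (hx a b) hab

lemma measurePreserving_comp_perm (σ : Equiv.Perm κ) :
    MeasurePreserving fun x : κ → ℝ => x ∘ σ :=
  volume_preserving_arrowCongr' σ.symm (.refl ℝ) (.id volume)

lemma perm_eq_of_strictMono_comp {κ α : Type*} [LinearOrder κ] [WellFoundedLT κ] [Preorder α]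
    {x : κ → α} {σ τ : Equiv.Perm κ} (hσ : StrictMono (x ∘ σ)) (hτ : StrictMono (x ∘ τ)) :
    σ = τ := by
  have hx : Function.Injective x := (σ.injective_comp x).1 hσ.injective
  have h : x ∘ σ = x ∘ τ := (hσ.range_inj hτ).1 <| by
    rw [σ.surjective.range_comp, τ.surjective.range_comp]
  exact Equiv.coe_fn_injective (hx.comp_left h)

lemma measurableSet_strictMono {κ : Type*} [Countable κ] [Preorder κ] :
    MeasurableSet {x : κ → ℝ | StrictMono x} := by
  simp only [StrictMono, Set.ofPred_forall]
  exact .iInter fun a => .iInter fun b => .iInter fun _ =>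
    measurableSet_lt (measurable_pi_apply a) (measurable_pi_apply b)

/-- The tuples `x` for which the rearrangement `x i ∘ σ i` lies in `E i` for every `i`. When `E i`
consists of sorted vectors, these are the tuples with sorting permutations `σ` and sorted
rearrangements in `E`. -/
def permCell (E : ι → Set (κ → ℝ)) (σ : ι → Equiv.Perm κ) : Set (ι → κ → ℝ) :=
  Set.pi Set.univ fun i => (· ∘ σ i) ⁻¹' E i

variable [Fintype ι]

lemma volume_biUnion_permCell [LinearOrder κ] {E : ι → Set (κ → ℝ)}
    (hE : ∀ i, MeasurableSet (E i)) (hmono : ∀ i, ∀ x ∈ E i, StrictMono x)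
    (A : Set (ι → Equiv.Perm κ)) :
    volume (⋃ σ ∈ A, permCell E σ) = Nat.card A * ∏ i, volume (E i) := by
  have hmeas : ∀ σ, MeasurableSet (permCell E σ) := fun σ => .univ_pi fun i =>
    (measurePreserving_comp_perm (σ i)).measurable (hE i)
  have hdisj : A.PairwiseDisjoint (permCell E) := fun σ _ τ _ hστ =>
    Set.disjoint_left.2 fun x hxσ hxτ => hστ <| funext fun i =>
      perm_eq_of_strictMono_comp (hmono i _ (hxσ i trivial)) (hmono i _ (hxτ i trivial))
  have hvol : ∀ σ, volume (permCell E σ) = ∏ i, volume (E i) := fun σ => by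
    rw [permCell, volume_pi_pi]
    exact Finset.prod_congr rfl fun i _ =>
      (measurePreserving_comp_perm (σ i)).measure_preimage (hE i).nullMeasurableSet
  rw [measure_biUnion A.to_countable hdisj fun σ _ => hmeas σ]
  simp [hvol]

lemma ae_exists_strictMono_comp_perm (N : ℕ) :
    ∀ᵐ x : ι → Fin N → ℝ, ∃ σ : ι → Equiv.Perm (Fin N), ∀ i, StrictMono (x i ∘ σ i) := by
  have hinj : ∀ i, ∀ᵐ x : ι → Fin N → ℝ, Function.Injective (x i) := fun i =>
    (Measure.quasiMeasurePreserving_eval (fun _ : ι => volume) i).ae ae_injective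
  filter_upwards [ae_all_iff.2 hinj] with x hx
  exact ⟨fun i => Tuple.sort (x i), fun i =>
    (Tuple.monotone_sort (x i)).strictMono_of_injective ((hx i).comp (Equiv.injective _))⟩

end Cells

section Kappa

variable {N : ℕ}

lemma kappa_comp_perm (x : Fin N → ℝ) (σ : Equiv.Perm (Fin N)) :
    kappa (fun j => x (σ j)) = kappa x := by
  rw [kappa, kappa, Equiv.sum_comp σ x]

lemma kappa_sub (x y : Fin N → ℝ) : kappa (fun j => x j - y j) = kappa x - kappa y := by
  simp only [kappa, Finset.sum_sub_distrib, sub_div]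

lemma kappa_const_mul (c : ℝ) (x : Fin N → ℝ) : kappa (fun j => c * x j) = c * kappa x := by
  simp only [kappa, ← Finset.mul_sum, mul_div_assoc]

lemma kappa_sum {ι : Type*} (s : Finset ι) (x : ι → Fin N → ℝ) :
    kappa (fun j => ∑ i ∈ s, x i j) = ∑ i ∈ s, kappa (x i) := by
  simp only [kappa, Finset.sum_comm (s := Finset.univ), Finset.sum_div]

lemma kappa_mono {x y : Fin N → ℝ} (h : ∀ j, x j ≤ y j) : kappa x ≤ kappa y :=
  div_le_div_of_nonneg_right (Finset.sum_le_sum fun j _ => h j) N.cast_nonneg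

lemma abs_kappa_le (x : Fin N → ℝ) : |kappa x| ≤ kappa fun j => |x j| := by
  rw [kappa, abs_div, Nat.abs_cast]
  exact div_le_div_of_nonneg_right (Finset.abs_sum_le_sum_abs _ _) N.cast_nonneg

lemma kappa_const_le {c : ℝ} (hc : 0 ≤ c) : kappa (fun _ : Fin N => c) ≤ c := by
  simpa [kappa, mul_div_right_comm] using mul_le_of_le_one_left hc (div_self_le_one (N : ℝ))

lemma abs_kappa_sub_le {x y : Fin N → ℝ} {c : ℝ} (hc : 0 ≤ c) (h : ∀ j, |x j - y j| ≤ c) :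
    |kappa x - kappa y| ≤ c := by
  rw [← kappa_sub]
  exact (abs_kappa_le _).trans ((kappa_mono h).trans (kappa_const_le hc))

lemma abs_kappa_eval_sub_le {x y : Fin N → ℝ} (p : Polynomial ℝ) {δ : ℝ} (hδ : 0 ≤ δ)
    (h : ∀ k, 1 ≤ k → k ≤ p.natDegree →
      |kappa (fun j => x j ^ k) - kappa (fun j => y j ^ k)| ≤ δ) :
    |kappa (fun j => p.eval (x j)) - kappa (fun j => p.eval (y j))| ≤
      (∑ k ∈ Finset.range (p.natDegree + 1), |p.coeff k|) * δ := by
  simp only [Polynomial.eval_eq_sum_range, kappa_sum, kappa_const_mul]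
  rw [← Finset.sum_sub_distrib, Finset.sum_mul]
  refine (Finset.abs_sum_le_sum_abs _ _).trans (Finset.sum_le_sum fun k hk => ?_)
  rw [← mul_sub, abs_mul]
  refine mul_le_mul_of_nonneg_left ?_ (abs_nonneg _)
  rcases k.eq_zero_or_pos with rfl | hk0
  · simpa using hδ
  · exact h k hk0 (Nat.lt_succ_iff.1 (Finset.mem_range.1 hk))

end Kappa

section Microstates

variable {Ω : Type*} [MeasurableSpace Ω] {μ : Measure Ω} {n : ℕ} {X : Fin n → Ω → ℝ} {R : ℝ}
  {N m m' : ℕ} {δ δ' : ℝ}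

/-- The tuples whose mixed moments satisfy the constraints defining `DeltaR`, with no bound on the
coordinates; unlike `DeltaR`, this set is open. -/
def momentNhd (μ : Measure Ω) (X : Fin n → Ω → ℝ) (N m : ℕ) (δ : ℝ) : Set (Fin n → Fin N → ℝ) :=
  ⋂ k ∈ Finset.Icc 1 m, ⋂ idx : Fin k → Fin n,
    {x | |kappa (fun j => ∏ l, x (idx l) j) - ∫ ω, ∏ l, X (idx l) ω ∂μ| < δ}

lemma isOpen_momentNhd : IsOpen (momentNhd μ X N m δ) := by
  refine isOpen_biInter_finset fun k _ => isOpen_iInter_of_finite fun idx =>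
    isOpen_lt ?_ continuous_const
  unfold kappa
  fun_prop

lemma DeltaR_eq_inter : DeltaR μ X R N m δ =
    (Set.pi Set.univ fun _ => Set.pi Set.univ fun _ => Set.Icc (-R) R) ∩ momentNhd μ X N m δ := by
  ext x
  simp [DeltaR, momentNhd, abs_le, -Set.pi_univ_Icc]

lemma measurableSet_DeltaR : MeasurableSet (DeltaR μ X R N m δ) := by
  rw [DeltaR_eq_inter]
  exact (MeasurableSet.univ_pi fun _ => .univ_pi fun _ => measurableSet_Icc).inter
    isOpen_momentNhd.measurableSet

lemma volume_DeltaR_le : volume (DeltaR μ X R N m δ) ≤ ENNReal.ofReal (2 * R) ^ (N * n) := by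
  rw [DeltaR_eq_inter]
  refine (measure_mono Set.inter_subset_left).trans_eq ?_
  simp only [volume_pi_pi, Real.volume_Icc, Finset.prod_const, Finset.card_univ, Fintype.card_fin,
    sub_neg_eq_add, ← two_mul, ← pow_mul]

lemma volume_DeltaR_ne_top : volume (DeltaR μ X R N m δ) ≠ ⊤ :=
  (volume_DeltaR_le.trans_lt (ENNReal.pow_lt_top ENNReal.ofReal_lt_top)).ne

lemma volume_DeltaR_ne_zero (hR : n ≠ 0 → 0 < R) (h : (DeltaR μ X R N m δ).Nonempty) :
    volume (DeltaR μ X R N m δ) ≠ 0 := by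
  let U : Set (Fin n → Fin N → ℝ) :=
    Set.pi Set.univ fun _ => Set.pi Set.univ fun _ => Set.Ioo (-R) R
  have hU : IsOpen U := isOpen_set_pi Set.finite_univ fun _ _ =>
    isOpen_set_pi Set.finite_univ fun _ _ => isOpen_Ioo
  have hclosure : closure U = Set.pi Set.univ fun _ => Set.pi Set.univ fun _ => Set.Icc (-R) R := by
    simp only [U, closure_pi_set]
    refine Set.pi_congr rfl fun i _ => Set.pi_congr rfl fun j _ => closure_Ioo ?_
    linarith [hR (Fin.pos i).ne']
  rw [DeltaR_eq_inter, ← hclosure] at h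
  obtain ⟨x, hx, hxm⟩ := h
  have hne : (momentNhd μ X N m δ ∩ U).Nonempty :=
    mem_closure_iff.1 hx _ isOpen_momentNhd hxm
  refine ne_of_gt (((isOpen_momentNhd.inter hU).measure_pos volume hne).trans_le ?_)
  rw [DeltaR_eq_inter, ← hclosure]
  exact measure_mono fun y hy => ⟨subset_closure hy.2, hy.1⟩

lemma DeltaR_anti (hm : m ≤ m') (hδ : δ' ≤ δ) : DeltaR μ X R N m' δ' ⊆ DeltaR μ X R N m δ :=
  fun _ hx => ⟨hx.1, fun k h1 hk idx => (hx.2 k h1 (hk.trans hm) idx).trans_le hδ⟩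

lemma DeltaSymR_anti (hm : m ≤ m') (hδ : δ' ≤ δ) :
    DeltaSymR μ X R N m' δ' ⊆ DeltaSymR μ X R N m δ :=
  fun _ ⟨x, hmono, hx⟩ => ⟨x, hmono, DeltaR_anti hm hδ hx⟩

lemma comp_perm_mem_DeltaR {x : Fin n → Fin N → ℝ} (hx : x ∈ DeltaR μ X R N m δ)
    (σ : Equiv.Perm (Fin N)) : (fun i => x i ∘ σ) ∈ DeltaR μ X R N m δ :=
  ⟨fun i j => hx.1 i (σ j), fun k h1 hk idx => by
    simpa only [Function.comp_apply, kappa_comp_perm fun j => ∏ l, x (idx l) j]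
      using hx.2 k h1 hk idx⟩

lemma reindex_mem_DeltaR {n' : ℕ} {x : Fin n → Fin N → ℝ} (hx : x ∈ DeltaR μ X R N m δ)
    (f : Fin n' → Fin n) : x ∘ f ∈ DeltaR μ (X ∘ f) R N m δ :=
  ⟨fun i => hx.1 (f i), fun k h1 hk idx => hx.2 k h1 hk (f ∘ idx)⟩

/-- The strictly increasing microstates of a single random variable `Y`. -/
def sortedMicrostates (μ : Measure Ω) (Y : Ω → ℝ) (R : ℝ) (N m : ℕ) (δ : ℝ) : Set (Fin N → ℝ) :=
  {x | StrictMono x} ∩ {x | (fun _ : Fin 1 => x) ∈ DeltaR μ (fun _ : Fin 1 => Y) R N m δ}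

lemma measurableSet_sortedMicrostates {Y : Ω → ℝ} :
    MeasurableSet (sortedMicrostates μ Y R N m δ) := by
  have hconst : Measurable fun (x : Fin N → ℝ) (_ : Fin 1) => x := by fun_prop
  exact measurableSet_strictMono.inter
    (hconst (measurableSet_DeltaR (μ := μ) (X := fun _ => Y) (R := R) (m := m) (δ := δ)))

lemma card_DeltaSymR_le : Nat.card (DeltaSymR μ X R N m δ) ≤ N.factorial ^ n := by
  simpa [Fintype.card_perm] using Finite.card_subtype_le (· ∈ DeltaSymR μ X R N m δ)

lemma ae_mem_biUnion_permCell_of_mem_DeltaR : ∀ᵐ x : Fin n → Fin N → ℝ,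
    x ∈ DeltaR μ X R N m δ → x ∈ ⋃ σ ∈ DeltaSymR μ X R N m δ,
      permCell (fun i => sortedMicrostates μ (X i) R N m δ) σ := by
  filter_upwards [ae_exists_strictMono_comp_perm N] with x ⟨σ, hσ⟩ hx
  have hσ_mem : σ ∈ DeltaSymR μ X R N m δ :=
    ⟨fun i => x i ∘ σ i, fun i => (hσ i).monotone, by simpa using hx⟩
  exact Set.mem_biUnion hσ_mem fun i _ =>
    ⟨hσ i, comp_perm_mem_DeltaR (reindex_mem_DeltaR hx fun _ => i) (σ i)⟩

lemma volume_biUnion_permCell_sortedMicrostates (A : Set (Fin n → Equiv.Perm (Fin N))) :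
    volume (⋃ σ ∈ A, permCell (fun i => sortedMicrostates μ (X i) R N m δ) σ) =
      Nat.card A * ∏ i, volume (sortedMicrostates μ (X i) R N m δ) :=
  volume_biUnion_permCell (fun _ => measurableSet_sortedMicrostates) (fun _ _ hx => hx.1) A

lemma volume_DeltaR_le_card_mul_prod : volume (DeltaR μ X R N m δ) ≤
    Nat.card (DeltaSymR μ X R N m δ) * ∏ i, volume (sortedMicrostates μ (X i) R N m δ) :=
  (measure_mono_ae ae_mem_biUnion_permCell_of_mem_DeltaR).trans_eq
    (volume_biUnion_permCell_sortedMicrostates _)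

lemma card_mul_prod_le_volume_DeltaR {A : Set (Fin n → Equiv.Perm (Fin N))}
    (hA : ∀ σ ∈ A, permCell (fun i => sortedMicrostates μ (X i) R N m' δ') σ ⊆
      DeltaR μ X R N m δ) :
    Nat.card A * ∏ i, volume (sortedMicrostates μ (X i) R N m' δ') ≤
      volume (DeltaR μ X R N m δ) := by
  rw [← volume_biUnion_permCell_sortedMicrostates]
  exact measure_mono (Set.iUnion₂_subset hA)

lemma volume_DeltaR_single (Y : Ω → ℝ) : volume (DeltaR μ (fun _ : Fin 1 => Y) R N m δ) =
    N.factorial * volume (sortedMicrostates μ Y R N m δ) := by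
  apply le_antisymm
  · have hcard : Nat.card (DeltaSymR μ (fun _ : Fin 1 => Y) R N m δ) ≤ N.factorial := by
      simpa only [pow_one] using card_DeltaSymR_le (μ := μ) (X := fun _ : Fin 1 => Y)
    have h := volume_DeltaR_le_card_mul_prod (μ := μ) (X := fun _ : Fin 1 => Y)
      (R := R) (N := N) (m := m) (δ := δ)
    rw [Fin.prod_univ_one] at h
    exact h.trans (mul_le_mul_left (Nat.cast_le.2 hcard) _)
  · have h : ∀ σ ∈ Set.univ, permCell (fun _ : Fin 1 => sortedMicrostates μ Y R N m δ) σ ⊆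
        DeltaR μ (fun _ : Fin 1 => Y) R N m δ := fun σ _ x hx => by
      have hx0 : (fun _ => (x 0 ∘ σ 0) ∘ ⇑(σ 0)⁻¹) ∈ DeltaR μ (fun _ : Fin 1 => Y) R N m δ :=
        comp_perm_mem_DeltaR (hx 0 trivial).2 (σ 0)⁻¹
      convert hx0 using 1
      ext i j
      simp [Subsingleton.elim i 0]
    simpa [Fintype.card_perm] using card_mul_prod_le_volume_DeltaR h

end Microstates

section SortedVectors

lemma disjoint_iUnion_Ioc_of_monotone {κ α : Type*} [LinearOrder κ] [Preorder α] {x y : κ → α}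
    (hx : Monotone x) (hy : Monotone y) :
    Disjoint (⋃ j, Set.Ioc (x j) (y j)) (⋃ j, Set.Ioc (y j) (x j)) := by
  simp only [Set.disjoint_iUnion_left, Set.disjoint_iUnion_right]
  refine fun j i => Set.disjoint_left.2 fun t ⟨hxt, hty⟩ ⟨hyt, htx⟩ => ?_
  rcases le_total i j with hij | hji
  · exact hyt.not_ge (hty.trans (hy hij))
  · exact hxt.not_ge (htx.trans (hx hji))

lemma exists_lipschitzWith_sub_eq_abs {κ : Type*} [LinearOrder κ] [Countable κ] {x y : κ → ℝ}
    (hx : Monotone x) (hy : Monotone y) :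
    ∃ f : ℝ → ℝ, LipschitzWith 1 f ∧ f 0 = 0 ∧ ∀ j, f (y j) - f (x j) = |y j - x j| := by
  -- `f` is a Kantorovich potential for the transport `x j ↦ y j`: it climbs wherever mass moves
  -- right, and sortedness ensures that no mass moves left there.
  let U := ⋃ j, Set.Ioc (x j) (y j)
  let h : ℝ → ℝ := fun t => if t ∈ U then 1 else -1
  have hU : MeasurableSet U := .iUnion fun _ => measurableSet_Ioc
  have hnorm : ∀ t, ‖h t‖ ≤ 1 := fun t => by simp only [h]; split_ifs <;> simp
  have hint : ∀ a b, IntervalIntegrable h volume a b := fun a b =>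
    (intervalIntegrable_const (c := (1 : ℝ))).mono_fun
      (Measurable.ite hU measurable_const measurable_const).aestronglyMeasurable
      (.of_forall fun t => by simpa using hnorm t)
  have hsub : ∀ a b, (∫ t in (0 : ℝ)..b, h t) - (∫ t in (0 : ℝ)..a, h t) = ∫ t in a..b, h t :=
    fun a b => intervalIntegral.integral_interval_sub_left (hint _ _) (hint _ _)
  refine ⟨fun s => ∫ t in (0 : ℝ)..s, h t, .of_dist_le_mul fun a b => ?_, by simp, fun j => ?_⟩
  · simpa [Real.dist_eq, hsub] using
      intervalIntegral.norm_integral_le_of_norm_le_const fun t _ => hnorm t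
  simp only [hsub]
  rcases le_total (x j) (y j) with hle | hle
  · have h1 : ∀ t ∈ Set.uIoc (x j) (y j), h t = 1 := fun t ht =>
      if_pos (Set.mem_iUnion.2 ⟨j, Set.uIoc_of_le hle ▸ ht⟩)
    rw [intervalIntegral.integral_congr_ae (.of_forall h1)]
    simp [abs_of_nonneg (sub_nonneg.2 hle)]
  · have h1 : ∀ t ∈ Set.uIoc (x j) (y j), h t = -1 := fun t ht =>
      if_neg fun htU => Set.disjoint_left.1 (disjoint_iUnion_Ioc_of_monotone hx hy) htU
        (Set.mem_iUnion.2 ⟨j, Set.uIoc_of_ge hle ▸ ht⟩)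
    rw [intervalIntegral.integral_congr_ae (.of_forall h1)]
    simp [abs_of_nonpos (sub_nonpos.2 hle)]

open scoped NNReal
open BoundedContinuousFunction

lemma isCompact_closure_lipschitzWith {α : Type*} [PseudoMetricSpace α] [CompactSpace α] (K : ℝ≥0)
    (C : ℝ) : IsCompact (closure {g : α →ᵇ ℝ | LipschitzWith K g ∧ ∀ a, |g a| ≤ C}) :=
  arzela_ascoli (Set.Icc (-C) C) isCompact_Icc _ (fun _ a hg => abs_le.1 (hg.2 a))
    (LipschitzWith.uniformEquicontinuous _ K fun g => g.2.1).equicontinuous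

lemma exists_finset_polynomial_near_lipschitzWith (K : ℝ≥0) (R : ℝ) {ε : ℝ} (hε : 0 < ε) :
    ∃ P : Finset (Polynomial ℝ), ∀ f : ℝ → ℝ, LipschitzWith K f → f 0 = 0 →
      ∃ p ∈ P, ∀ s, |s| ≤ R → |f s - p.eval s| < ε := by
  let q (p : Polynomial ℝ) : Set.Icc (-R) R →ᵇ ℝ := mkOfCompact (p.toContinuousMapOn _)
  have hcover : ∀ g : Set.Icc (-R) R →ᵇ ℝ, ∃ p, g ∈ Metric.ball (q p) ε := fun g => by
    obtain ⟨p, hp⟩ := exists_polynomial_near_continuousMap (-R) R g.toContinuousMap ε hε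
    refine ⟨p, (dist_lt_iff_of_compact hε).2 fun s => ?_⟩
    rw [dist_comm, dist_eq_norm]
    exact (ContinuousMap.norm_lt_iff _ hε).1 hp s
  obtain ⟨P, hP⟩ := (isCompact_closure_lipschitzWith K (K * R)).elim_finite_subcover
    (fun p => Metric.ball (q p) ε) (fun _ => Metric.isOpen_ball)
    fun g _ => Set.mem_iUnion.2 (hcover g)
  refine ⟨P, fun f hf h0 => ?_⟩
  let g : Set.Icc (-R) R →ᵇ ℝ :=
    mkOfCompact ⟨fun s => f s, hf.continuous.comp continuous_subtype_val⟩
  have hbound : ∀ a : Set.Icc (-R) R, |f a| ≤ K * R := fun a => by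
    have h : |f a| ≤ K * |(a : ℝ)| := by simpa [Real.dist_eq, h0] using hf.dist_le_mul a 0
    exact h.trans (mul_le_mul_of_nonneg_left (abs_le.2 a.2) K.2)
  have hg := hP <| subset_closure <|
    show LipschitzWith K g ∧ ∀ a, |g a| ≤ K * R from ⟨hf.lipschitzOnWith.to_restrict, hbound⟩
  simp only [Set.mem_iUnion] at hg
  obtain ⟨p, hpP, hp⟩ := hg
  exact ⟨p, hpP, fun s hs => (dist_coe_le_dist (f := g) ⟨s, abs_le.1 hs⟩).trans_lt hp⟩

lemma exists_forall_kappa_abs_sub_le (R : ℝ) {ε : ℝ} (hε : 0 < ε) :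
    ∃ (m : ℕ) (δ : ℝ), 0 < δ ∧ ∀ (N : ℕ) (x y : Fin N → ℝ), Monotone x → Monotone y →
      (∀ j, |x j| ≤ R) → (∀ j, |y j| ≤ R) →
      (∀ k, 1 ≤ k → k ≤ m → |kappa (fun j => x j ^ k) - kappa (fun j => y j ^ k)| ≤ δ) →
      kappa (fun j => |x j - y j|) ≤ ε := by
  obtain ⟨P, hP⟩ := exists_finset_polynomial_near_lipschitzWith 1 R (show 0 < ε / 3 by positivity)
  let S (p : Polynomial ℝ) : ℝ := ∑ k ∈ Finset.range (p.natDegree + 1), |p.coeff k|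
  have hS : ∀ p, 0 ≤ S p := fun p => Finset.sum_nonneg fun _ _ => abs_nonneg _
  let T := ∑ p ∈ P, S p
  have hT : 0 < T + 1 := add_pos_of_nonneg_of_pos (Finset.sum_nonneg fun p _ => hS p) one_pos
  let δ := ε / 3 / (T + 1)
  have hδ : 0 < δ := div_pos (by positivity) hT
  refine ⟨P.sup Polynomial.natDegree, δ, hδ, fun N x y hx hy hxR hyR hmom => ?_⟩
  obtain ⟨f, hf, hf0, hfxy⟩ := exists_lipschitzWith_sub_eq_abs hy hx
  obtain ⟨p, hpP, hp⟩ := hP f hf hf0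
  have happrox : ∀ z : Fin N → ℝ, (∀ j, |z j| ≤ R) →
      |kappa (fun j => f (z j)) - kappa fun j => p.eval (z j)| ≤ ε / 3 := fun z hz =>
    abs_kappa_sub_le (by positivity) fun j => (hp _ (hz j)).le
  have hpoly : |kappa (fun j => p.eval (x j)) - kappa fun j => p.eval (y j)| ≤ ε / 3 :=
    calc _ ≤ S p * δ := abs_kappa_eval_sub_le p hδ.le fun k hk0 hk =>
          hmom k hk0 (hk.trans (Finset.le_sup (f := Polynomial.natDegree) hpP))
      _ ≤ (T + 1) * δ := by
          gcongr
          linarith [Finset.single_le_sum (fun p _ => hS p) hpP]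
      _ = ε / 3 := mul_div_cancel₀ _ hT.ne'
  calc kappa (fun j => |x j - y j|) = kappa (fun j => f (x j)) - kappa fun j => f (y j) := by
        simp only [← hfxy, kappa_sub (fun j => f (x j))]
    _ ≤ ε := by
        linarith [abs_le.1 (happrox x hxR), abs_le.1 (happrox y hyR), abs_le.1 hpoly]

end SortedVectors

section Refinement

lemma norm_prod_sub_prod_le {ι A : Type*} [NormedCommRing A] [NormOneClass A] {C : ℝ}
    (hC : 1 ≤ C) {a b : ι → A} (ha : ∀ i, ‖a i‖ ≤ C) (hb : ∀ i, ‖b i‖ ≤ C) (s : Finset ι) :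
    ‖∏ i ∈ s, a i - ∏ i ∈ s, b i‖ ≤ C ^ s.card * ∑ i ∈ s, ‖a i - b i‖ := by
  induction s using Finset.induction_on with
  | empty => simp
  | insert i s his ih =>
    simp only [Finset.prod_insert his, Finset.sum_insert his, Finset.card_insert_of_notMem his]
    have hb_prod : ‖∏ j ∈ s, b j‖ ≤ C * C ^ s.card :=
      calc ‖∏ j ∈ s, b j‖ ≤ ∏ j ∈ s, ‖b j‖ := s.norm_prod_le b
        _ ≤ ∏ _ ∈ s, C := Finset.prod_le_prod (fun _ _ => norm_nonneg _) fun j _ => hb j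
        _ = C ^ s.card := Finset.prod_const C
        _ ≤ C * C ^ s.card := le_mul_of_one_le_left (by positivity) hC
    calc ‖a i * ∏ j ∈ s, a j - b i * ∏ j ∈ s, b j‖
        = ‖a i * (∏ j ∈ s, a j - ∏ j ∈ s, b j) + (a i - b i) * ∏ j ∈ s, b j‖ := by ring_nf
      _ ≤ ‖a i‖ * ‖∏ j ∈ s, a j - ∏ j ∈ s, b j‖ + ‖a i - b i‖ * ‖∏ j ∈ s, b j‖ :=
          norm_add_le_of_le (norm_mul_le _ _) (norm_mul_le _ _)
      _ ≤ C * (C ^ s.card * ∑ i ∈ s, ‖a i - b i‖) + ‖a i - b i‖ * (C * C ^ s.card) := by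
          gcongr
          exact ha i
      _ = C ^ (s.card + 1) * (‖a i - b i‖ + ∑ i ∈ s, ‖a i - b i‖) := by ring

lemma abs_kappa_prod_sub_le {N k : ℕ} {x y : Fin k → Fin N → ℝ} {C ε : ℝ} (hC : 1 ≤ C)
    (hx : ∀ l j, |x l j| ≤ C) (hy : ∀ l j, |y l j| ≤ C)
    (hxy : ∀ l, kappa (fun j => |x l j - y l j|) ≤ ε) :
    |kappa (fun j => ∏ l, x l j) - kappa (fun j => ∏ l, y l j)| ≤ C ^ k * (k * ε) :=
  calc |kappa (fun j => ∏ l, x l j) - kappa (fun j => ∏ l, y l j)|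
      ≤ kappa fun j => |∏ l, x l j - ∏ l, y l j| := by
        rw [← kappa_sub]
        exact abs_kappa_le _
    _ ≤ kappa fun j => C ^ k * ∑ l, |x l j - y l j| := kappa_mono fun j => by
        simpa using norm_prod_sub_prod_le (a := fun l => x l j) (b := fun l => y l j) hC
          (fun l => hx l j) (fun l => hy l j) Finset.univ
    _ = C ^ k * ∑ l, kappa fun j => |x l j - y l j| := by rw [kappa_const_mul, kappa_sum]
    _ ≤ C ^ k * (k * ε) := by
        gcongr
        simpa using Finset.sum_le_card_nsmul Finset.univ _ ε fun l _ => hxy l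

variable {Ω : Type*} [MeasurableSpace Ω] {μ : Measure Ω} {n : ℕ} {X : Fin n → Ω → ℝ} {R : ℝ}
  {N m : ℕ} {δ : ℝ}

lemma mem_DeltaR_of_kappa_abs_sub_le {x y : Fin n → Fin N → ℝ} {ε : ℝ} (hε : 0 ≤ ε)
    (hx : x ∈ DeltaR μ X R N m δ) (hy : ∀ i j, |y i j| ≤ R)
    (hxy : ∀ i, kappa (fun j => |x i j - y i j|) ≤ ε) :
    y ∈ DeltaR μ X R N m (δ + max R 1 ^ m * (m * ε)) := by
  refine ⟨hy, fun k h1 hk idx => ?_⟩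
  have hclose : |kappa (fun j => ∏ l, x (idx l) j) - kappa (fun j => ∏ l, y (idx l) j)| ≤
      max R 1 ^ m * (m * ε) :=
    calc _ ≤ max R 1 ^ k * (k * ε) := abs_kappa_prod_sub_le (le_max_right _ _)
          (fun l j => (hx.1 (idx l) j).trans (le_max_left _ _))
          (fun l j => (hy (idx l) j).trans (le_max_left _ _)) fun l => hxy (idx l)
      _ ≤ max R 1 ^ m * (m * ε) := by
          gcongr
          exact le_max_right _ _
  rw [abs_sub_comm] at hclose
  rw [add_comm]
  exact (abs_sub_le _ _ _).trans_lt (add_lt_add_of_le_of_lt hclose (hx.2 k h1 hk idx))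

lemma exists_forall_kappa_abs_sub_le_of_mem_DeltaR (μ : Measure Ω) (R : ℝ) {ε : ℝ}
    (hε : 0 < ε) : ∃ (m : ℕ) (δ : ℝ), 0 < δ ∧ ∀ (Y : Ω → ℝ) (N : ℕ) (x y : Fin N → ℝ),
      Monotone x → Monotone y → (fun _ => x) ∈ DeltaR μ (fun _ : Fin 1 => Y) R N m δ →
      (fun _ => y) ∈ DeltaR μ (fun _ : Fin 1 => Y) R N m δ →
      kappa (fun j => |x j - y j|) ≤ ε := by
  obtain ⟨m, δ, hδ, h⟩ := exists_forall_kappa_abs_sub_le R hε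
  refine ⟨m, δ / 2, half_pos hδ, fun Y N x y hx hy hxΔ hyΔ =>
    h N x y hx hy (hxΔ.1 0) (hyΔ.1 0) fun k h1 hk => ?_⟩
  have hxk := hxΔ.2 k h1 hk fun _ => 0
  have hyk := hyΔ.2 k h1 hk fun _ => 0
  simp only [Finset.prod_const, Finset.card_univ, Fintype.card_fin] at hxk hyk
  rw [abs_sub_comm] at hyk
  linarith [abs_sub_le (kappa fun j => x j ^ k) (∫ ω, Y ω ^ k ∂μ) (kappa fun j => y j ^ k)]

lemma exists_permCell_subset_DeltaR (hδ : 0 < δ) : ∃ (m' : ℕ) (δ' : ℝ), 0 < δ' ∧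
    ∀ N, ∀ σ ∈ DeltaSymR μ X R N m' δ',
      permCell (fun i => sortedMicrostates μ (X i) R N m' δ') σ ⊆ DeltaR μ X R N m δ := by
  let C := max R 1 ^ m
  have hC : 0 < C := by positivity
  let ε := δ / 2 / (C * (m + 1))
  have hε : 0 < ε := by positivity
  have hCε : C * (m * ε) ≤ δ / 2 :=
    calc C * (m * ε) ≤ C * ((m + 1) * ε) := by gcongr; linarith
      _ = δ / 2 := by simp only [ε]; field_simp
  obtain ⟨m₁, δ₁, hδ₁, hclose⟩ := exists_forall_kappa_abs_sub_le_of_mem_DeltaR μ R hε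
  refine ⟨max m m₁, min (δ / 2) δ₁, lt_min (half_pos hδ) hδ₁, ?_⟩
  rintro N σ ⟨x, hx, hxΔ⟩ z hz
  have hxσ : ∀ i, (fun _ => x i) ∈ DeltaR μ (fun _ : Fin 1 => X i) R N m₁ δ₁ := fun i => by
    have h := comp_perm_mem_DeltaR (reindex_mem_DeltaR hxΔ fun _ : Fin 1 => i) (σ i)
    simpa [Function.comp_def] using DeltaR_anti (le_max_right _ _) (min_le_right _ _) h
  have hxz : ∀ i, kappa (fun j => |x i ((σ i)⁻¹ j) - z i j|) ≤ ε := fun i => by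
    have h := hclose (X i) N (x i) (z i ∘ σ i) (hx i) (hz i trivial).1.monotone (hxσ i)
      (DeltaR_anti (le_max_right _ _) (min_le_right _ _) (hz i trivial).2)
    rw [← kappa_comp_perm _ (σ i)⁻¹] at h
    simpa using h
  have hzR : ∀ i j, |z i j| ≤ R := fun i j => by simpa using (hz i trivial).2.1 0 ((σ i)⁻¹ j)
  have hzΔ := mem_DeltaR_of_kappa_abs_sub_le hε.le
    (DeltaR_anti (le_max_left _ _) (min_le_left _ _) hxΔ) hzR hxz
  exact DeltaR_anti le_rfl (by linarith) hzΔ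

end Refinement

section LawOfLargeNumbers

variable {Ω : Type*} [MeasurableSpace Ω] {μ : Measure Ω}

lemma ae_tendsto_average_of_measurePreserving {Ω' : Type*} [MeasurableSpace Ω'] {P : Measure Ω'}
    {Y : ℕ → Ω' → Ω} (hY : ∀ j, MeasurePreserving (Y j) P μ)
    (hindep : Pairwise fun i j => ProbabilityTheory.IndepFun (Y i) (Y j) P) {g : Ω → ℝ}
    (hg : Integrable g μ) : ∀ᵐ w ∂P,
      Tendsto (fun N : ℕ => (∑ j ∈ Finset.range N, g (Y j w)) / N) atTop (nhds (∫ ω, g ω ∂μ)) := by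
  have hg_map : ∀ j, AEMeasurable g (P.map (Y j)) := fun j => by
    rw [(hY j).map_eq]
    exact hg.aemeasurable
  have hident : ∀ j, ProbabilityTheory.IdentDistrib (g ∘ Y j) (g ∘ Y 0) P P := fun j =>
    ProbabilityTheory.IdentDistrib.comp_of_aemeasurable ⟨(hY j).aemeasurable,
      (hY 0).aemeasurable, (hY j).map_eq.trans (hY 0).map_eq.symm⟩ (hg_map j)
  have hintegral : ∫ w, g (Y 0 w) ∂P = ∫ ω, g ω ∂μ := by
    rw [← integral_map (hY 0).aemeasurable (hg_map 0).aestronglyMeasurable, (hY 0).map_eq]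
  rw [← hintegral]
  exact ProbabilityTheory.strong_law_ae_real (fun j w => g (Y j w))
    ((hY 0).integrable_comp_of_integrable hg)
    (fun i j hij => (hindep hij).comp₀ (hY i).aemeasurable (hY j).aemeasurable
      (hg_map i) (hg_map j)) hident

variable [IsProbabilityMeasure μ] {n : ℕ} {X : Fin n → Ω → ℝ} {R : ℝ}

lemma integrable_prod_of_ae_abs_le (hX : ∀ i, AEMeasurable (X i) μ)
    (hR : ∀ i, ∀ᵐ ω ∂μ, |X i ω| ≤ R) {k : ℕ} (idx : Fin k → Fin n) :
    Integrable (fun ω => ∏ l, X (idx l) ω) μ := by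
  refine .of_bound (by fun_prop) (R ^ k) ?_
  filter_upwards [ae_all_iff.2 hR] with ω hω
  rw [Real.norm_eq_abs, Finset.abs_prod]
  simpa using Finset.prod_le_prod (s := Finset.univ) (fun _ _ => abs_nonneg _) fun l _ => hω (idx l)

lemma eventually_nonempty_DeltaR (hX : ∀ i, AEMeasurable (X i) μ)
    (hR : ∀ i, ∀ᵐ ω ∂μ, |X i ω| ≤ R) (m : ℕ) {δ : ℝ} (hδ : 0 < δ) :
    ∀ᶠ N in atTop, (DeltaR μ X R N m δ).Nonempty := by
  have heval : ∀ j, MeasurePreserving (Function.eval j) (Measure.infinitePi fun _ : ℕ => μ) μ :=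
    measurePreserving_eval_infinitePi fun _ : ℕ => μ
  have hindep := ProbabilityTheory.iIndepFun_infinitePi (P := fun _ : ℕ => μ)
    (X := fun _ => id) fun _ => measurable_id
  have hbound : ∀ᵐ w ∂Measure.infinitePi fun _ : ℕ => μ, ∀ i j, |X i (w j)| ≤ R :=
    ae_all_iff.2 fun i => ae_all_iff.2 fun j => (heval j).quasiMeasurePreserving.ae (hR i)
  have hmoments : ∀ᵐ w ∂Measure.infinitePi fun _ : ℕ => μ, ∀ (k : ℕ) (idx : Fin k → Fin n),
      Tendsto (fun N : ℕ => (∑ j ∈ Finset.range N, ∏ l, X (idx l) (w j)) / N) atTop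
        (nhds (∫ ω, ∏ l, X (idx l) ω ∂μ)) :=
    ae_all_iff.2 fun k => ae_all_iff.2 fun idx =>
      ae_tendsto_average_of_measurePreserving heval (fun _ _ hij => hindep.indepFun hij)
        (integrable_prod_of_ae_abs_le hX hR idx)
  obtain ⟨w, hwR, hw⟩ := (hbound.and hmoments).exists
  have hclose : ∀ᶠ N : ℕ in atTop, ∀ k ∈ Finset.Icc 1 m, ∀ idx : Fin k → Fin n,
      |(∑ j ∈ Finset.range N, ∏ l, X (idx l) (w j)) / N - ∫ ω, ∏ l, X (idx l) ω ∂μ| < δ :=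
    (eventually_all_finset _).2 fun k _ => eventually_all.2 fun idx =>
      (hw k idx).eventually (Metric.ball_mem_nhds _ hδ)
  filter_upwards [hclose] with N hN
  refine ⟨fun i j => X i (w j), fun i j => hwR i j, fun k h1 hk idx => ?_⟩
  rw [kappa, Fin.sum_univ_eq_sum_range fun j => ∏ l, X (idx l) (w j)]
  exact hN k (Finset.mem_Icc.2 ⟨h1, hk⟩) idx

end LawOfLargeNumbers

section LogVolume

variable {Ω : Type*} [MeasurableSpace Ω] {μ : Measure Ω} {n : ℕ} {X : Fin n → Ω → ℝ} {R : ℝ}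
  {N m m' : ℕ} {δ δ' : ℝ}

lemma log_toReal_div_le_log_toReal_div {a b : ℝ≥0∞} (ha : a ≠ 0) (hab : a ≤ b) (hb : b ≠ ⊤)
    (N : ℕ) : Real.log a.toReal / N ≤ Real.log b.toReal / N :=
  div_le_div_of_nonneg_right (Real.log_le_log (ENNReal.toReal_pos ha (ne_top_of_le_ne_top hb hab))
    (ENNReal.toReal_mono hb hab)) N.cast_nonneg

lemma volume_sortedMicrostates_ne_top {Y : Ω → ℝ} :
    volume (sortedMicrostates μ Y R N m δ) ≠ ⊤ := by
  have h : volume (DeltaR μ (fun _ : Fin 1 => Y) R N m δ) ≠ ⊤ := volume_DeltaR_ne_top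
  rw [volume_DeltaR_single] at h
  exact fun htop => h (by simp [htop, ENNReal.mul_top, Nat.factorial_ne_zero])

lemma card_mul_prod_ne_top : (Nat.card (DeltaSymR μ X R N m δ) : ℝ≥0∞) *
    ∏ i, volume (sortedMicrostates μ (X i) R N m δ) ≠ ⊤ :=
  ENNReal.mul_ne_top (ENNReal.natCast_ne_top _)
    (ENNReal.prod_ne_top fun _ _ => volume_sortedMicrostates_ne_top)

lemma card_mul_prod_ne_zero (h : volume (DeltaR μ X R N m δ) ≠ 0) :
    (Nat.card (DeltaSymR μ X R N m δ) : ℝ≥0∞) *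
      ∏ i, volume (sortedMicrostates μ (X i) R N m δ) ≠ 0 :=
  ((pos_iff_ne_zero.2 h).trans_le volume_DeltaR_le_card_mul_prod).ne'

lemma card_DeltaSymR_ne_zero (h : volume (DeltaR μ X R N m δ) ≠ 0) :
    Nat.card (DeltaSymR μ X R N m δ) ≠ 0 :=
  Nat.cast_ne_zero.1 (left_ne_zero_of_mul (card_mul_prod_ne_zero h))

lemma volume_sortedMicrostates_ne_zero (h : volume (DeltaR μ X R N m δ) ≠ 0) (i : Fin n) :
    volume (sortedMicrostates μ (X i) R N m δ) ≠ 0 :=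
  Finset.prod_ne_zero_iff.1 (right_ne_zero_of_mul (card_mul_prod_ne_zero h)) i (Finset.mem_univ i)

lemma symQ_add_sum_volQ (h : volume (DeltaR μ X R N m δ) ≠ 0) :
    symQ μ X R N m δ + ∑ i, volQ μ (fun _ : Fin 1 => X i) R N m δ =
      Real.log ((Nat.card (DeltaSymR μ X R N m δ) : ℝ≥0∞) *
        ∏ i, volume (sortedMicrostates μ (X i) R N m δ)).toReal / N := by
  have hcard : (Nat.card (DeltaSymR μ X R N m δ) : ℝ) ≠ 0 :=
    Nat.cast_ne_zero.2 (card_DeltaSymR_ne_zero h)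
  have hfactorial : (N.factorial : ℝ) ≠ 0 := Nat.cast_ne_zero.2 N.factorial_ne_zero
  have hsorted : ∀ i, (volume (sortedMicrostates μ (X i) R N m δ)).toReal ≠ 0 := fun i =>
    ENNReal.toReal_ne_zero.2 ⟨volume_sortedMicrostates_ne_zero h i, volume_sortedMicrostates_ne_top⟩
  simp only [symQ, volQ, volume_DeltaR_single, ENNReal.toReal_mul, ENNReal.toReal_natCast,
    ENNReal.toReal_prod]
  rw [← Finset.sum_div, ← add_div, Real.log_div hcard (pow_ne_zero n hfactorial),
    Real.log_mul hcard (Finset.prod_ne_zero_iff.2 fun i _ => hsorted i), Real.log_pow,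
    Real.log_prod fun i _ => hsorted i]
  simp only [Real.log_mul hfactorial (hsorted _), Finset.sum_add_distrib, Finset.sum_const,
    Finset.card_univ, Fintype.card_fin, nsmul_eq_mul]
  ring

lemma volQ_le_symQ_add_sum_volQ (h : volume (DeltaR μ X R N m δ) ≠ 0) :
    volQ μ X R N m δ ≤
      symQ μ X R N m δ + ∑ i, volQ μ (fun _ : Fin 1 => X i) R N m δ := by
  rw [symQ_add_sum_volQ h]
  exact log_toReal_div_le_log_toReal_div h volume_DeltaR_le_card_mul_prod card_mul_prod_ne_top N

lemma symQ_add_sum_volQ_le_volQ (h : volume (DeltaR μ X R N m' δ') ≠ 0)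
    (hcell : ∀ σ ∈ DeltaSymR μ X R N m' δ',
      permCell (fun i => sortedMicrostates μ (X i) R N m' δ') σ ⊆ DeltaR μ X R N m δ) :
    symQ μ X R N m' δ' + ∑ i, volQ μ (fun _ : Fin 1 => X i) R N m' δ' ≤ volQ μ X R N m δ := by
  rw [symQ_add_sum_volQ h]
  exact log_toReal_div_le_log_toReal_div (card_mul_prod_ne_zero h)
    (card_mul_prod_le_volume_DeltaR hcell) volume_DeltaR_ne_top N

lemma volQ_anti (h : volume (DeltaR μ X R N m' δ') ≠ 0) (hm : m ≤ m') (hδ : δ' ≤ δ) :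
    volQ μ X R N m' δ' ≤ volQ μ X R N m δ :=
  log_toReal_div_le_log_toReal_div h (measure_mono (DeltaR_anti hm hδ)) volume_DeltaR_ne_top N

lemma symQ_anti (h : volume (DeltaR μ X R N m' δ') ≠ 0) (hm : m ≤ m') (hδ : δ' ≤ δ) :
    symQ μ X R N m' δ' ≤ symQ μ X R N m δ := by
  have hpos : (0 : ℝ) < Nat.card (DeltaSymR μ X R N m' δ') :=
    Nat.cast_pos.2 (card_DeltaSymR_ne_zero h).bot_lt
  have hcard : Nat.card (DeltaSymR μ X R N m' δ') ≤ Nat.card (DeltaSymR μ X R N m δ) :=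
    Nat.card_mono (Set.toFinite _) (DeltaSymR_anti hm hδ)
  unfold symQ
  gcongr

lemma symQ_nonpos : symQ μ X R N m δ ≤ 0 := by
  have hcard : (Nat.card (DeltaSymR μ X R N m δ) : ℝ) ≤ (N.factorial : ℝ) ^ n :=
    mod_cast card_DeltaSymR_le
  exact div_nonpos_of_nonpos_of_nonneg (Real.log_nonpos (by positivity)
    (div_le_one_of_le₀ hcard (by positivity))) N.cast_nonneg

lemma volQ_le : volQ μ X R N m δ ≤ n * Real.log (max 1 (2 * R)) := by
  have hvol : (volume (DeltaR μ X R N m δ)).toReal ≤ max 1 (2 * R) ^ (N * n) := by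
    rw [← ENNReal.toReal_ofReal (zero_le_one.trans (le_max_left 1 (2 * R))), ← ENNReal.toReal_pow]
    refine ENNReal.toReal_mono (ENNReal.pow_ne_top ENNReal.ofReal_ne_top)
      (volume_DeltaR_le.trans ?_)
    gcongr
    exact le_max_right _ _
  have hlog : 0 ≤ Real.log (max 1 (2 * R)) := Real.log_nonneg (le_max_left _ _)
  have hlog_le : Real.log (volume (DeltaR μ X R N m δ)).toReal ≤
      N * (n * Real.log (max 1 (2 * R))) := by
    rcases ENNReal.toReal_nonneg.eq_or_lt with h0 | hpos
    · rw [← h0, Real.log_zero]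
      positivity
    · simpa [mul_assoc] using Real.log_le_log hpos hvol
  exact div_le_of_le_mul₀ N.cast_nonneg (by positivity) (by rwa [mul_comm] at hlog_le)

end LogVolume

section HasMicrostates

variable {Ω : Type*} [MeasurableSpace Ω] {μ : Measure Ω} {n : ℕ} {X : Fin n → Ω → ℝ} {R : ℝ}

/-- Every microstate set of `X` with a positive tolerance eventually has positive volume. Since
`Real.log 0 = 0`, this is what makes the real number `volQ` the genuine logarithmic volume. -/
def HasMicrostates (μ : Measure Ω) (X : Fin n → Ω → ℝ) (R : ℝ) : Prop :=
  ∀ (m : ℕ) (δ : ℝ), 0 < δ → ∀ᶠ N in atTop, volume (DeltaR μ X R N m δ) ≠ 0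

lemma HasMicrostates.single (h : HasMicrostates μ X R) (i : Fin n) :
    HasMicrostates μ (fun _ : Fin 1 => X i) R := fun m δ hδ => by
  filter_upwards [h m δ hδ] with N hN
  rw [volume_DeltaR_single]
  exact mul_ne_zero (Nat.cast_ne_zero.2 N.factorial_ne_zero) (volume_sortedMicrostates_ne_zero hN i)

lemma diffEntropy_dirac {E : Type*} [MeasurableSpace E] [MeasurableSingletonClass E]
    (ν : Measure E) [NullSingletonClass ν] (a : E) : diffEntropy ν (Measure.dirac a) = ⊥ := by
  refine if_neg fun hac => ?_
  simpa using hac (measure_singleton a)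

lemma volQ_eq_zero_of_nonpos (hn : n ≠ 0) (hR : R ≤ 0) (N m : ℕ) (δ : ℝ) :
    volQ μ X R N m δ = 0 := by
  rcases eq_or_ne N 0 with rfl | hN
  · simp [volQ]
  · have hzero : volume (DeltaR μ X R N m δ) = 0 := by
      refine le_antisymm (volume_DeltaR_le.trans_eq ?_) zero_le
      rw [ENNReal.ofReal_of_nonpos (by linarith), zero_pow (mul_ne_zero hN hn)]
    simp [volQ, hzero]

-- If `R ≤ 0` then `X = 0` a.e. has entropy `⊥`, but the junk value `Real.log 0 = 0` makes the
-- right-hand side of the volume formula vanish.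
lemma pos_of_microstateVolumeFormula [IsProbabilityMeasure μ] (hn : n ≠ 0)
    (hR : ∀ i, ∀ᵐ ω ∂μ, |X i ω| ≤ R) (hvol : MicrostateVolumeFormula μ X R) : 0 < R := by
  by_contra! hR0
  have hX : (fun ω (i : Fin n) => X i ω) =ᵐ[μ] fun _ => 0 := by
    filter_upwards [ae_all_iff.2 hR] with ω hω
    exact funext fun i => abs_nonpos_iff.1 ((hω i).trans hR0)
  have : Nonempty (Fin n) := ⟨⟨0, hn.bot_lt⟩⟩
  have hbot : diffEntropy volume (Measure.map (fun ω (i : Fin n) => X i ω) μ) = ⊥ := by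
    rw [Measure.map_congr hX, Measure.map_const, measure_univ, one_smul, diffEntropy_dirac]
  have hnonneg : 0 ≤ diffEntropy volume (Measure.map (fun ω (i : Fin n) => X i ω) μ) := by
    rw [hvol.1]
    simp [volQ_eq_zero_of_nonpos hn hR0]
  simp [hbot] at hnonneg

lemma hasMicrostates_of_microstateVolumeFormula [IsProbabilityMeasure μ]
    (hX : ∀ i, AEMeasurable (X i) μ) (hR : ∀ i, ∀ᵐ ω ∂μ, |X i ω| ≤ R)
    (hvol : MicrostateVolumeFormula μ X R) : HasMicrostates μ X R := fun m _ hδ =>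
  (eventually_nonempty_DeltaR hX hR m hδ).mono fun _ hN =>
    volume_DeltaR_ne_zero (fun hn => pos_of_microstateVolumeFormula hn hR hvol) hN

end HasMicrostates

section GeneralizedLimits

lemma ereal_coe_finsetSum {ι : Type*} (s : Finset ι) (f : ι → ℝ) :
    ((∑ i ∈ s, f i : ℝ) : EReal) = ∑ i ∈ s, (f i : EReal) :=
  map_sum (⟨⟨Real.toEReal, EReal.coe_zero⟩, EReal.coe_add⟩ : ℝ →+ EReal) f s

lemma finsetSum_ne_top {ι : Type*} {s : Finset ι} {f : ι → EReal} (hf : ∀ i ∈ s, f i ≠ ⊤) :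
    ∑ i ∈ s, f i ≠ ⊤ :=
  Finset.sum_induction f (· ≠ ⊤) (fun _ _ => EReal.add_ne_top) EReal.zero_ne_top hf

lemma tendsto_add_of_ne_top {α : Type*} {l : Filter α} {f g : α → EReal} {a b : EReal}
    (ha : a ≠ ⊤) (hb : b ≠ ⊤) (hf : Tendsto f l (nhds a)) (hg : Tendsto g l (nhds b)) :
    Tendsto (fun x => f x + g x) l (nhds (a + b)) :=
  (EReal.continuousAt_add (p := (a, b)) (.inl ha) (.inr hb)).tendsto.comp (hf.prodMk_nhds hg)

lemma tendsto_finsetSum_of_ne_top {ι α : Type*} {l : Filter α} {s : Finset ι}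
    {f : ι → α → EReal} {a : ι → EReal} (ha : ∀ i ∈ s, a i ≠ ⊤)
    (hf : ∀ i ∈ s, Tendsto (f i) l (nhds (a i))) :
    Tendsto (fun x => ∑ i ∈ s, f i x) l (nhds (∑ i ∈ s, a i)) := by
  induction s using Finset.cons_induction with
  | empty => simpa using tendsto_const_nhds
  | cons i s _ ih =>
    rw [Finset.forall_mem_cons] at ha hf
    simp only [Finset.sum_cons]
    exact tendsto_add_of_ne_top ha.1 (finsetSum_ne_top ha.2) hf.1 (ih ha.2 hf.2)

lemma limsup_finsetSum_le {ι α : Type*} {l : Filter α} {s : Finset ι} {f : ι → α → EReal}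
    (hf : ∀ i ∈ s, limsup (f i) l ≠ ⊤) :
    limsup (∑ i ∈ s, f i) l ≤ ∑ i ∈ s, limsup (f i) l := by
  induction s using Finset.cons_induction with
  | empty => exact limsup_le_of_le (h := .of_forall fun _ => le_rfl)
  | cons i s _ ih =>
    rw [Finset.forall_mem_cons] at hf
    have hs : limsup (∑ i ∈ s, f i) l ≠ ⊤ := ne_top_of_le_ne_top (finsetSum_ne_top hf.2) (ih hf.2)
    simp only [Finset.sum_cons]
    exact (EReal.limsup_add_le (.inr hs) (.inl hf.1)).trans (add_le_add_right (ih hf.2) _)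

lemma finsetSum_le_liminf {ι α : Type*} {l : Filter α} {s : Finset ι} {f : ι → α → EReal} :
    ∑ i ∈ s, liminf (f i) l ≤ liminf (∑ i ∈ s, f i) l := by
  induction s using Finset.cons_induction with
  | empty => exact le_liminf_of_le (h := .of_forall fun _ => le_rfl)
  | cons i s _ ih =>
    simp only [Finset.sum_cons]
    exact (add_le_add_right ih _).trans EReal.le_liminf_add

/-- The properties shared by `limsup` and `liminf` along `l` from which the entropy formula
follows; they let the formulas for `Isym` and `IsymUpper` be proved at once. -/
structure IsGeneralizedLimit {α : Type*} (l : Filter α) (L : (α → EReal) → EReal) : Prop where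
  mono {u v : α → EReal} : u ≤ᶠ[l] v → L u ≤ L v
  le_limsup (u : α → EReal) : L u ≤ limsup u l
  add_le {u v : α → EReal} : limsup u l ≠ ⊤ → limsup v l ≠ ⊤ → L (u + v) ≤ L u + limsup v l
  le_add (u v : α → EReal) : L u + liminf v l ≤ L (u + v)

lemma isGeneralizedLimit_limsup {α : Type*} (l : Filter α) :
    IsGeneralizedLimit l fun u => limsup u l where
  mono h := limsup_le_limsup h
  le_limsup _ := le_rfl
  add_le hu hv := EReal.limsup_add_le (.inr hv) (.inl hu)
  le_add _ _ := EReal.le_limsup_add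

lemma isGeneralizedLimit_liminf {α : Type*} (l : Filter α) [l.NeBot] :
    IsGeneralizedLimit l fun u => liminf u l where
  mono h := liminf_le_liminf h
  le_limsup _ := liminf_le_limsup
  add_le {u v} hu hv := by
    rw [add_comm u, add_comm (liminf u l)]
    exact EReal.liminf_add_le (.inr (ne_top_of_le_ne_top hu liminf_le_limsup)) (.inl hv)
  le_add _ _ := EReal.le_liminf_add

end GeneralizedLimits

section RefinementLimits

/-- The infimum over the moment order `m` and the tolerance `δ > 0`. For functions decreasing under
refinement (larger `m`, smaller `δ`) it is their limit as `m → ∞` and `δ → 0`. -/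
noncomputable def refinementInf (F : ℕ → ℝ → EReal) : EReal :=
  ⨅ (m : ℕ) (δ : ℝ) (_ : 0 < δ), F m δ

/-- `F m δ` decreases when `(m, δ)` is refined. -/
def RefinementAntitone (F : ℕ → ℝ → EReal) : Prop :=
  ∀ ⦃m m' : ℕ⦄ ⦃δ δ' : ℝ⦄, m ≤ m' → 0 < δ' → δ' ≤ δ → F m' δ' ≤ F m δ

lemma refinementInf_le (F : ℕ → ℝ → EReal) (m : ℕ) {δ : ℝ} (hδ : 0 < δ) :
    refinementInf F ≤ F m δ :=
  iInf_le_of_le m (iInf₂_le δ hδ)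

lemma le_refinementInf {F : ℕ → ℝ → EReal} {a : EReal} (h : ∀ m δ, 0 < δ → a ≤ F m δ) :
    a ≤ refinementInf F :=
  le_iInf fun m => le_iInf₂ fun δ hδ => h m δ hδ

lemma RefinementAntitone.tendsto {F : ℕ → ℝ → EReal} (hF : RefinementAntitone F) :
    Tendsto (fun p : ℕ => F p (1 / ((p : ℝ) + 1))) atTop (nhds (refinementInf F)) := by
  refine tendsto_order.2 ⟨fun a ha => .of_forall fun p =>
    ha.trans_le (refinementInf_le F p Nat.one_div_pos_of_nat), fun a ha => ?_⟩
  obtain ⟨m, δ, hδ, hFa⟩ : ∃ (m : ℕ) (δ : ℝ), 0 < δ ∧ F m δ < a := by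
    simpa [refinementInf, iInf_lt_iff] using ha
  filter_upwards [eventually_ge_atTop m,
    tendsto_one_div_add_atTop_nhds_zero_nat.eventually (gt_mem_nhds hδ)] with p hp hpδ
  exact (hF hp Nat.one_div_pos_of_nat hpδ.le).trans_lt hFa

variable {ι : Type*} [Fintype ι] {V S : ℕ → ℝ → EReal} {B : ι → ℕ → ℝ → EReal}

lemma refinementInf_le_add_sum (hS : RefinementAntitone S) (hB : ∀ i, RefinementAntitone (B i))
    (hS_top : refinementInf S ≠ ⊤) (hB_top : ∀ i, refinementInf (B i) ≠ ⊤)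
    (hV : ∀ m δ, 0 < δ → V m δ ≤ S m δ + ∑ i, B i m δ) :
    refinementInf V ≤ refinementInf S + ∑ i, refinementInf (B i) :=
  ge_of_tendsto' (tendsto_add_of_ne_top hS_top (finsetSum_ne_top fun i _ => hB_top i) hS.tendsto
    (tendsto_finsetSum_of_ne_top (fun i _ => hB_top i) fun i _ => (hB i).tendsto)) fun p =>
    (refinementInf_le V p Nat.one_div_pos_of_nat).trans (hV p _ Nat.one_div_pos_of_nat)

lemma add_sum_le_refinementInf (hV : ∀ m δ, 0 < δ → ∃ (m' : ℕ) (δ' : ℝ), 0 < δ' ∧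
      S m' δ' + ∑ i, B i m' δ' ≤ V m δ) :
    refinementInf S + ∑ i, refinementInf (B i) ≤ refinementInf V := by
  refine le_refinementInf fun m δ hδ => ?_
  obtain ⟨m', δ', hδ', h⟩ := hV m δ hδ
  exact (add_le_add (refinementInf_le S m' hδ')
    (Finset.sum_le_sum fun i _ => refinementInf_le (B i) m' hδ')).trans h

end RefinementLimits

section EntropyFormula

variable {Ω : Type*} [MeasurableSpace Ω] {μ : Measure Ω} {n : ℕ} {X : Fin n → Ω → ℝ} {R : ℝ}
  {L : (ℕ → EReal) → EReal}

lemma limsup_coe_ne_top_of_le {α : Type*} {l : Filter α} {u : α → ℝ} {c : ℝ}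
    (h : ∀ x, u x ≤ c) : limsup (fun x => (u x : EReal)) l ≠ ⊤ :=
  ne_top_of_le_ne_top (EReal.coe_ne_top c)
    (limsup_le_of_le (h := .of_forall fun x => EReal.coe_le_coe (h x)))

lemma IsGeneralizedLimit.refinementInf_ne_top (hL : IsGeneralizedLimit atTop L)
    {u : ℕ → ℕ → ℝ → ℝ} {c : ℝ} (h : ∀ N m δ, u N m δ ≤ c) :
    refinementInf (fun m δ => L fun N => (u N m δ : EReal)) ≠ ⊤ :=
  ne_top_of_le_ne_top (limsup_coe_ne_top_of_le fun N => h N 0 1)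
    ((refinementInf_le _ 0 one_pos).trans (hL.le_limsup _))

lemma HasMicrostates.refinementAntitone_volQ (h : HasMicrostates μ X R)
    (hL : IsGeneralizedLimit atTop L) :
    RefinementAntitone fun m δ => L fun N => (volQ μ X R N m δ : EReal) :=
  fun _ m' _ δ' hm hδ' hδ => hL.mono <| (h m' δ' hδ').mono fun _ hN =>
    EReal.coe_le_coe (volQ_anti hN hm hδ)

lemma HasMicrostates.refinementAntitone_symQ (h : HasMicrostates μ X R)
    (hL : IsGeneralizedLimit atTop L) :
    RefinementAntitone fun m δ => L fun N => (symQ μ X R N m δ : EReal) :=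
  fun _ m' _ δ' hm hδ' hδ => hL.mono <| (h m' δ' hδ').mono fun _ hN =>
    EReal.coe_le_coe (symQ_anti hN hm hδ)

lemma HasMicrostates.volQ_le_symQ_add_sum (h : HasMicrostates μ X R)
    (hL : IsGeneralizedLimit atTop L) (m : ℕ) {δ : ℝ} (hδ : 0 < δ) :
    L (fun N => (volQ μ X R N m δ : EReal)) ≤ L (fun N => (symQ μ X R N m δ : EReal)) +
      ∑ i, limsup (fun N => (volQ μ (fun _ : Fin 1 => X i) R N m δ : EReal)) atTop := by
  have hvol_top : ∀ i ∈ Finset.univ,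
      limsup (fun N => (volQ μ (fun _ : Fin 1 => X i) R N m δ : EReal)) atTop ≠ ⊤ :=
    fun _ _ => limsup_coe_ne_top_of_le fun _ => volQ_le
  have hsum_le := limsup_finsetSum_le hvol_top
  calc L (fun N => (volQ μ X R N m δ : EReal))
      ≤ L ((fun N => (symQ μ X R N m δ : EReal)) +
          ∑ i, fun N => (volQ μ (fun _ : Fin 1 => X i) R N m δ : EReal)) := by
        refine hL.mono ((h m δ hδ).mono fun N hN => ?_)
        simpa [ereal_coe_finsetSum] using EReal.coe_le_coe (volQ_le_symQ_add_sum_volQ hN)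
    _ ≤ _ := (hL.add_le (limsup_coe_ne_top_of_le fun _ => symQ_nonpos)
        (ne_top_of_le_ne_top (finsetSum_ne_top hvol_top) hsum_le)).trans
          (add_le_add_right hsum_le _)

lemma HasMicrostates.exists_symQ_add_sum_le_volQ (h : HasMicrostates μ X R)
    (hL : IsGeneralizedLimit atTop L) (m : ℕ) {δ : ℝ} (hδ : 0 < δ) :
    ∃ (m' : ℕ) (δ' : ℝ), 0 < δ' ∧ L (fun N => (symQ μ X R N m' δ' : EReal)) +
        ∑ i, liminf (fun N => (volQ μ (fun _ : Fin 1 => X i) R N m' δ' : EReal)) atTop ≤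
      L (fun N => (volQ μ X R N m δ : EReal)) := by
  obtain ⟨m', δ', hδ', hcell⟩ := exists_permCell_subset_DeltaR (μ := μ) (X := X) (R := R) hδ
  refine ⟨m', δ', hδ', ?_⟩
  calc _ ≤ L ((fun N => (symQ μ X R N m' δ' : EReal)) +
          ∑ i, fun N => (volQ μ (fun _ : Fin 1 => X i) R N m' δ' : EReal)) :=
        (add_le_add_right finsetSum_le_liminf _).trans (hL.le_add _ _)
    _ ≤ L (fun N => (volQ μ X R N m δ : EReal)) := by
        refine hL.mono ((h m' δ' hδ').mono fun N hN => ?_)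
        simpa [ereal_coe_finsetSum] using EReal.coe_le_coe (symQ_add_sum_volQ_le_volQ hN (hcell N))

theorem HasMicrostates.refinementInf_volQ_eq (h : HasMicrostates μ X R)
    (hL : IsGeneralizedLimit atTop L) {H : Fin n → EReal}
    (hlimsup : ∀ i, H i = refinementInf fun m δ =>
      limsup (fun N => (volQ μ (fun _ : Fin 1 => X i) R N m δ : EReal)) atTop)
    (hliminf : ∀ i, H i = refinementInf fun m δ =>
      liminf (fun N => (volQ μ (fun _ : Fin 1 => X i) R N m δ : EReal)) atTop) :
    refinementInf (fun m δ => L fun N => (volQ μ X R N m δ : EReal)) =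
      refinementInf (fun m δ => L fun N => (symQ μ X R N m δ : EReal)) + ∑ i, H i := by
  apply le_antisymm
  · rw [Finset.sum_congr rfl fun i _ => hlimsup i]
    exact refinementInf_le_add_sum (h.refinementAntitone_symQ hL)
      (fun i => (h.single i).refinementAntitone_volQ (isGeneralizedLimit_limsup atTop))
      (hL.refinementInf_ne_top fun _ _ _ => symQ_nonpos)
      (fun i => (isGeneralizedLimit_limsup atTop).refinementInf_ne_top fun _ _ _ => volQ_le)
      fun m _ hδ => h.volQ_le_symQ_add_sum hL m hδ
  · rw [Finset.sum_congr rfl fun i _ => hliminf i]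
    exact add_sum_le_refinementInf fun m _ hδ => h.exists_symQ_add_sum_le_volQ hL m hδ

lemma sum_diffEntropy_ne_top (hvol : ∀ i, MicrostateVolumeFormula μ (fun _ : Fin 1 => X i) R) :
    ∑ i, diffEntropy volume (Measure.map (fun ω (_ : Fin 1) => X i ω) μ) ≠ ⊤ :=
  finsetSum_ne_top fun i _ => (hvol i).1.trans_ne <|
    (isGeneralizedLimit_limsup atTop).refinementInf_ne_top fun _ _ _ => volQ_le

lemma eq_of_add_eq_add_of_ne_bot_of_ne_top {a b c : EReal} (hbot : c ≠ ⊥) (htop : c ≠ ⊤)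
    (h : a + c = b + c) : a = b := by
  lift c to ℝ using ⟨htop, hbot⟩
  rw [← EReal.add_sub_cancel_right (a := a) (b := c), h, EReal.add_sub_cancel_right]

end EntropyFormula

/-- Theorem 1.6: `H(X₁,…,Xₙ) = -I_sym + ∑ᵢ H(Xᵢ) = -Ī_sym + ∑ᵢ H(Xᵢ)`; in
particular `I_sym = Ī_sym` when `∑ᵢ H(Xᵢ)` is finite or `H(X₁,…,Xₙ) > -∞`. -/
theorem stmt10 {Ω : Type*} [MeasurableSpace Ω] (μ : Measure Ω)
    [IsProbabilityMeasure μ] (n : ℕ) (X : Fin n → Ω → ℝ)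
    (hmeas : ∀ i, Measurable (X i)) (R : ℝ)
    (hbdd : ∀ i, ∀ᵐ ω ∂μ, |X i ω| ≤ R)
    (hvol : MicrostateVolumeFormula μ X R)
    (hvoli : ∀ i, MicrostateVolumeFormula μ (fun _ : Fin 1 => X i) R) :
    diffEntropy volume (Measure.map (fun ω (i : Fin n) => X i ω) μ)
        = -Isym μ X R + ∑ i, diffEntropy volume
            (Measure.map (fun ω (_ : Fin 1) => X i ω) μ) ∧
    diffEntropy volume (Measure.map (fun ω (i : Fin n) => X i ω) μ)
        = -IsymUpper μ X R + ∑ i, diffEntropy volume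
            (Measure.map (fun ω (_ : Fin 1) => X i ω) μ) ∧
    (((∑ i, diffEntropy volume (Measure.map (fun ω (_ : Fin 1) => X i ω) μ)) ≠ ⊥ ∧
      (∑ i, diffEntropy volume (Measure.map (fun ω (_ : Fin 1) => X i ω) μ)) ≠ ⊤) ∨
      diffEntropy volume (Measure.map (fun ω (i : Fin n) => X i ω) μ) ≠ ⊥ →
      Isym μ X R = IsymUpper μ X R) := by
  have hmicro : HasMicrostates μ X R :=
    hasMicrostates_of_microstateVolumeFormula (fun i => (hmeas i).aemeasurable) hbdd hvol
  have hsup : diffEntropy volume (Measure.map (fun ω (i : Fin n) => X i ω) μ) =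
      -Isym μ X R + ∑ i, diffEntropy volume (Measure.map (fun ω (_ : Fin 1) => X i ω) μ) := by
    rw [Isym, neg_neg, hvol.1]
    exact hmicro.refinementInf_volQ_eq (isGeneralizedLimit_limsup atTop)
      (fun i => (hvoli i).1) fun i => (hvoli i).2
  have hinf : diffEntropy volume (Measure.map (fun ω (i : Fin n) => X i ω) μ) =
      -IsymUpper μ X R + ∑ i, diffEntropy volume (Measure.map (fun ω (_ : Fin 1) => X i ω) μ) := by
    rw [IsymUpper, neg_neg, hvol.2]
    exact hmicro.refinementInf_volQ_eq (isGeneralizedLimit_liminf atTop)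
      (fun i => (hvoli i).1) fun i => (hvoli i).2
  refine ⟨hsup, hinf, fun hfin => ?_⟩
  have hbot : ∑ i, diffEntropy volume (Measure.map (fun ω (_ : Fin 1) => X i ω) μ) ≠ ⊥ :=
    hfin.elim And.left fun hH h => hH (by rw [hsup, h, EReal.add_bot])
  exact neg_injective (eq_of_add_eq_add_of_ne_bot_of_ne_top hbot (sum_diffEntropy_ne_top hvoli)
    (hsup.symm.trans hinf))
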